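/- arXiv:2503.00556 — 5 statements merged into one kernel-verified Lean document; each statement's English description precedes it below -/
import Mathlib

section
/- (Proposition 2.2, part a) Fix λ₀ > 0 and u₀ ∈ F, and set v₀ = Λ̃ − Λ(u₀). Then u₀ minimizes J_{λ₀} over F if and only if ‖v₀*∘Λ‖_* ≤ 1/(2λ₀) and ⟨v₀, Λ(u₀)⟩_H = ‖u₀‖_F/(2λ₀). -/
open scoped InnerProductSpace

/-!
By convexity, `x` minimizes a convex `f` plus a least-squares term exactly when minus the derivative
of the least-squares term at `x` is a subgradient of `f` at `x`: the second-order remainder of the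
square is nonnegative, and it disappears in the limit along segments issuing from `x`. The
subgradients of the norm at `x` are the functionals of norm at most one which attain `‖x‖` at `x`.
-/

open Filter Set Topology

theorem nonpos_of_forall_le_mul {a b : ℝ} (h : ∀ t ∈ Ioo (0 : ℝ) 1, a ≤ t * b) : a ≤ 0 := by
  have hlim : Tendsto (fun t : ℝ ↦ t * b) (𝓝[>] 0) (𝓝 0) :=
    tendsto_nhdsWithin_of_tendsto_nhds <| by
      simpa only [zero_mul] using (continuous_mul_const b).tendsto 0
  exact ge_of_tendsto hlim (eventually_of_mem (Ioo_mem_nhdsGT one_pos) h)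

/-- The linear form `φ` is a subgradient of `f` at `x`, in the sense of convex analysis; it replaces
the derivative of `f` in first-order optimality conditions. No continuity is imposed on `φ`, so that
the notion makes sense without a topology. -/
def HasSubgradientAt {E : Type*} [AddCommGroup E] [Module ℝ E]
    (f : E → ℝ) (φ : E →ₗ[ℝ] ℝ) (x : E) : Prop :=
  ∀ y, f x + φ (y - x) ≤ f y

theorem hasSubgradientAt_of_forall_le_add_quadratic {E : Type*} [AddCommGroup E] [Module ℝ E]
    {f : E → ℝ} (hf : ConvexOn ℝ univ f) {φ : E →ₗ[ℝ] ℝ} {x : E} {r : E → ℝ}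
    (hr : ∀ (t : ℝ) (z : E), r (t • z) = t ^ 2 * r z)
    (h : ∀ y, f x + φ (y - x) ≤ f y + r (y - x)) : HasSubgradientAt f φ x := by
  intro y
  suffices f x + φ (y - x) - f y ≤ 0 from sub_nonpos.mp this
  refine nonpos_of_forall_le_mul (b := r (y - x)) fun t ⟨ht₀, ht₁⟩ ↦ ?_
  have hconv : f (x + t • (y - x)) ≤ (1 - t) * f x + t * f y := by
    have hcomb : x + t • (y - x) = (1 - t) • x + t • y := by module
    rw [hcomb]
    exact hf.2 (mem_univ x) (mem_univ y) (sub_nonneg.mpr ht₁.le) ht₀.le (sub_add_cancel 1 t)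
  have hseg : f x + t * φ (y - x) ≤ f (x + t • (y - x)) + t ^ 2 * r (y - x) := by
    simpa only [add_sub_cancel_left, map_smul, smul_eq_mul, hr] using h (x + t • (y - x))
  refine le_of_mul_le_mul_left ?_ ht₀
  linarith

section LeastSquares

variable {E H : Type*} [AddCommGroup E] [Module ℝ E]
  [SeminormedAddCommGroup H] [InnerProductSpace ℝ H]

theorem norm_sub_map_sq_eq (A : E →ₗ[ℝ] H) (b : H) (x y : E) :
    ‖b - A y‖ ^ 2 =
      ‖b - A x‖ ^ 2 - 2 * ⟪b - A x, A (y - x)⟫_ℝ + ‖A (y - x)‖ ^ 2 := by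
  rw [← norm_sub_sq_real, map_sub, sub_sub_sub_cancel_right]

theorem forall_leastSquares_add_le_iff_hasSubgradientAt {f : E → ℝ} (hf : ConvexOn ℝ univ f)
    (A : E →ₗ[ℝ] H) (b : H) {c : ℝ} (hc : 0 ≤ c) (x : E) :
    (∀ y, c * ‖b - A x‖ ^ 2 + f x ≤ c * ‖b - A y‖ ^ 2 + f y) ↔
      HasSubgradientAt f ((2 * c) • (innerₗ H (b - A x) ∘ₗ A)) x := by
  have hexpand (y : E) : c * ‖b - A y‖ ^ 2 = c * ‖b - A x‖ ^ 2 -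
      ((2 * c) • (innerₗ H (b - A x) ∘ₗ A)) (y - x) + c * ‖A (y - x)‖ ^ 2 := by
    rw [norm_sub_map_sq_eq A b x y, LinearMap.smul_apply, LinearMap.comp_apply, innerₗ_apply_apply,
      smul_eq_mul]
    ring
  constructor
  · intro hmin
    have hquad (t : ℝ) (z : E) : c * ‖A (t • z)‖ ^ 2 = t ^ 2 * (c * ‖A z‖ ^ 2) := by
      rw [map_smul, norm_smul, mul_pow, Real.norm_eq_abs, sq_abs, mul_left_comm]
    refine hasSubgradientAt_of_forall_le_add_quadratic hf (r := fun z ↦ c * ‖A z‖ ^ 2) hquad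
      fun y ↦ ?_
    linarith [hmin y, hexpand y]
  · intro hsub y
    have hrem : 0 ≤ c * ‖A (y - x)‖ ^ 2 := by positivity
    linarith [hsub y, hexpand y]

end LeastSquares

section Norm

variable {E : Type*} [SeminormedAddCommGroup E] [NormedSpace ℝ E]

theorem opNorm_le_of_forall_apply_le {φ : StrongDual ℝ E} {C : ℝ} (hC : 0 ≤ C)
    (h : ∀ x, φ x ≤ C * ‖x‖) : ‖φ‖ ≤ C := by
  refine φ.opNorm_le_bound hC fun x ↦ abs_le'.mpr ⟨h x, ?_⟩
  simpa only [map_neg, norm_neg] using h (-x)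

theorem hasSubgradientAt_norm_iff {φ : StrongDual ℝ E} {x : E} :
    HasSubgradientAt (fun y : E ↦ ‖y‖) φ x ↔ ‖φ‖ ≤ 1 ∧ φ x = ‖x‖ := by
  constructor
  · intro hsub
    have hle (y : E) : φ y ≤ ‖y‖ := by
      have hstep : ‖x‖ + φ y ≤ ‖x + y‖ := by
        simpa only [add_sub_cancel_left, ContinuousLinearMap.coe_coe] using hsub (x + y)
      linarith [norm_add_le x y]
    have hge : ‖x‖ ≤ φ x := by
      have hzero : ‖x‖ + -φ x ≤ 0 := by
        simpa only [zero_sub, map_neg, norm_zero, ContinuousLinearMap.coe_coe] using hsub 0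
      linarith
    exact ⟨opNorm_le_of_forall_apply_le zero_le_one (by simpa only [one_mul] using hle),
      (hle x).antisymm hge⟩
  · rintro ⟨hnorm, hx⟩ y
    calc ‖x‖ + φ (y - x) = φ y := by rw [map_sub, hx, add_sub_cancel]
      _ ≤ ‖φ y‖ := le_abs_self _
      _ ≤ 1 * ‖y‖ := φ.le_of_opNorm_le hnorm y
      _ = ‖y‖ := one_mul _

end Norm

theorem minimizer_characterization_general
    {H : Type*} [SeminormedAddCommGroup H] [InnerProductSpace ℝ H]
    {F : Type*} [SeminormedAddCommGroup F] [NormedSpace ℝ F]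
    (Λ : F →L[ℝ] H) (Λt : H)
    (lam0 : ℝ) (hlam0 : 0 < lam0) (u0 : F) :
    (∀ u : F, lam0 * ‖Λt - Λ u0‖ ^ 2 + ‖u0‖ ≤ lam0 * ‖Λt - Λ u‖ ^ 2 + ‖u‖) ↔
      (‖(innerSL ℝ (Λt - Λ u0)).comp Λ‖ ≤ 1 / (2 * lam0) ∧
        ⟪Λt - Λ u0, Λ u0⟫_ℝ = ‖u0‖ / (2 * lam0)) := by
  have hpos : 0 < 2 * lam0 := by positivity
  set φ : StrongDual ℝ F := (innerSL ℝ (Λt - Λ u0)).comp Λ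
  have hnorm : ‖(2 * lam0) • φ‖ ≤ 1 ↔ ‖φ‖ ≤ 1 / (2 * lam0) := by
    rw [norm_smul, Real.norm_of_nonneg hpos.le, le_div_iff₀' hpos]
  have hval : ((2 * lam0) • φ) u0 = ‖u0‖ ↔ ⟪Λt - Λ u0, Λ u0⟫_ℝ = ‖u0‖ / (2 * lam0) := by
    rw [eq_div_iff hpos.ne', mul_comm ⟪Λt - Λ u0, Λ u0⟫_ℝ]
    rfl
  rw [← hnorm, ← hval, ← hasSubgradientAt_norm_iff]
  exact forall_leastSquares_add_le_iff_hasSubgradientAt convexOn_univ_norm Λ.toLinearMap Λt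
    hlam0.le u0

/-- Proposition 2.2, part a): `u₀` minimizes `J_{λ₀}(u) = λ₀‖Λ̃ - Λ u‖² + ‖u‖_F` over `F`
if and only if `‖v₀* ∘ Λ‖_* ≤ 1/(2λ₀)` and `⟪v₀, Λ u₀⟫ = ‖u₀‖_F/(2λ₀)`,
where `v₀ = Λ̃ - Λ u₀`. -/
theorem minimizer_characterization
    {H : Type*} [NormedAddCommGroup H] [InnerProductSpace ℝ H]
    {F : Type*} [NormedAddCommGroup F] [NormedSpace ℝ F]
    (Λ : F →L[ℝ] H) (Λt : H)
    (lam0 : ℝ) (hlam0 : 0 < lam0) (u0 : F) :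
    (∀ u : F, lam0 * ‖Λt - Λ u0‖ ^ 2 + ‖u0‖ ≤ lam0 * ‖Λt - Λ u‖ ^ 2 + ‖u‖) ↔
      (‖(innerSL ℝ (Λt - Λ u0)).comp Λ‖ ≤ 1 / (2 * lam0) ∧
        ⟪Λt - Λ u0, Λ u0⟫_ℝ = ‖u0‖ / (2 * lam0)) :=
  minimizer_characterization_general Λ Λt lam0 hlam0 u0
end

section
/- (Proposition 2.2, part b) Fix λ₀ > 0. Then u₀ = 0 minimizes J_{λ₀} over F if and only if ‖Λ̃*∘Λ‖_* ≤ 1/(2λ₀), where Λ̃*∘Λ denotes the linear functional u ↦ ⟨Λ̃, Λ(u)⟩_H on F. -/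
open scoped InnerProductSpace

/-!
For a convex function `φ` with Gateaux derivative `φ'` at `x`, adding the penalty `C * ‖y - x‖`
keeps `x` a minimizer exactly when `‖φ'‖ ≤ C`: dividing the minimality inequality along `x + t • v`
by `t` and letting `t ↓ 0` gives `-(C * ‖v‖) ≤ φ' v`, while convexity puts `φ` above its tangent
at `x`, which returns the minimality inequality. The fidelity term `u ↦ lam0 * ‖Λt - Λ u‖ ^ 2` is
convex with derivative `u ↦ -2 * lam0 * ⟪Λt, Λ u⟫_ℝ` at `0`.
-/

open Set

section LineDerivative

variable {E : Type*} {φ : E → ℝ} {a : ℝ} {x v : E}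

theorem le_sub_of_convexOn_of_hasLineDerivAt [AddCommGroup E] [Module ℝ E] {s : Set E}
    (hφ : ConvexOn ℝ s φ) (hx : x ∈ s) (hxv : x + v ∈ s) (h : HasLineDerivAt ℝ φ a x v) :
    a ≤ φ (x + v) - φ x := by
  have hconv : ConvexOn ℝ (AffineMap.lineMap x (x + v) ⁻¹' s)
      (φ ∘ AffineMap.lineMap (k := ℝ) x (x + v)) :=
    hφ.comp_affineMap _
  have hderiv : HasDerivAt (φ ∘ AffineMap.lineMap (k := ℝ) x (x + v)) a 0 := by
    simpa only [Function.comp_def, AffineMap.lineMap_apply_module', add_sub_cancel_left,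
      add_comm _ x] using! h
  simpa [slope_def_field] using
    hconv.le_slope_of_hasDerivAt (by simpa using hx) (by simpa using hxv) zero_lt_one hderiv

theorem neg_mul_norm_le_of_hasLineDerivAt [SeminormedAddCommGroup E] [NormedSpace ℝ E] {C : ℝ}
    (h : HasLineDerivAt ℝ φ a x v) (hmin : ∀ y, φ x ≤ φ y + C * ‖y - x‖) :
    -(C * ‖v‖) ≤ a := by
  refine ge_of_tendsto h.tendsto_slope_zero_right ?_
  filter_upwards [self_mem_nhdsWithin] with t (ht : 0 < t)
  have hmin_t : φ x ≤ φ (x + t • v) + C * (t * ‖v‖) := by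
    simpa only [add_sub_cancel_left, norm_smul_of_nonneg ht.le] using hmin (x + t • v)
  rw [smul_eq_mul, le_inv_mul_iff₀ ht]
  linarith

end LineDerivative

section PenalizedMinimizer

variable {E : Type*} [SeminormedAddCommGroup E] [NormedSpace ℝ E] {C : ℝ}

theorem opNorm_le_iff_forall_neg_mul_norm_le {f : E →L[ℝ] ℝ} (hC : 0 ≤ C) :
    ‖f‖ ≤ C ↔ ∀ v, -(C * ‖v‖) ≤ f v := by
  simp only [ContinuousLinearMap.opNorm_le_iff hC, Real.norm_eq_abs, abs_le]
  refine ⟨fun h v ↦ (h v).1, fun h v ↦ ⟨h v, ?_⟩⟩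
  simpa only [map_neg, norm_neg, neg_le_neg_iff] using h (-v)

theorem forall_le_add_mul_norm_sub_iff_opNorm_le {φ : E → ℝ} {φ' : E →L[ℝ] ℝ} {x : E}
    (hφ : ConvexOn ℝ univ φ) (hφ' : ∀ v, HasLineDerivAt ℝ φ (φ' v) x v) (hC : 0 ≤ C) :
    (∀ y, φ x ≤ φ y + C * ‖y - x‖) ↔ ‖φ'‖ ≤ C := by
  rw [opNorm_le_iff_forall_neg_mul_norm_le hC]
  refine ⟨fun hmin v ↦ neg_mul_norm_le_of_hasLineDerivAt (hφ' v) hmin, fun h y ↦ ?_⟩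
  have htangent : φ' (y - x) ≤ φ y - φ x := by
    simpa only [add_sub_cancel] using
      le_sub_of_convexOn_of_hasLineDerivAt hφ (mem_univ x) (mem_univ _) (hφ' (y - x))
  linarith [h (y - x)]

end PenalizedMinimizer

section Fidelity

variable {E : Type*} [AddCommGroup E] [Module ℝ E]
  {H : Type*} [SeminormedAddCommGroup H]

theorem convexOn_norm_sub_linearMap_sq [NormedSpace ℝ H] (A : E →ₗ[ℝ] H) (b : H) :
    ConvexOn ℝ univ fun u ↦ ‖b - A u‖ ^ 2 :=
  ((convexOn_univ_norm (E := H)).pow (fun _ _ ↦ norm_nonneg _) 2).comp_affineMap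
    (AffineMap.const ℝ E b - A.toAffineMap)

theorem hasLineDerivAt_norm_sub_linearMap_sq [InnerProductSpace ℝ H] (A : E →ₗ[ℝ] H) (b : H)
    (x v : E) :
    HasLineDerivAt ℝ (fun u ↦ ‖b - A u‖ ^ 2) (-2 * ⟪b - A x, A v⟫_ℝ) x v := by
  have hexpand (t : ℝ) : ‖b - A (x + t • v)‖ ^ 2 =
      ‖b - A x‖ ^ 2 + -2 * ⟪b - A x, A v⟫_ℝ * t + ‖A v‖ ^ 2 * t ^ 2 := by
    rw [map_add, map_smul, ← sub_sub, norm_sub_sq_real, real_inner_smul_right, norm_smul, mul_pow,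
      Real.norm_eq_abs, sq_abs]
    ring
  simp only [HasLineDerivAt, hexpand]
  simpa using! (((hasDerivAt_id (0 : ℝ)).const_mul (-2 * ⟪b - A x, A v⟫_ℝ)).const_add
    (‖b - A x‖ ^ 2)).add ((hasDerivAt_pow 2 (0 : ℝ)).const_mul (‖A v‖ ^ 2))

end Fidelity

theorem zero_minimizer_iff_general
    {H : Type*} [SeminormedAddCommGroup H] [InnerProductSpace ℝ H]
    {F : Type*} [SeminormedAddCommGroup F] [NormedSpace ℝ F]
    (Λ : F →L[ℝ] H) (Λt : H) (lam0 : ℝ) (hlam0 : 0 < lam0) :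
    (∀ u : F, lam0 * ‖Λt - Λ (0 : F)‖ ^ 2 + ‖(0 : F)‖ ≤ lam0 * ‖Λt - Λ u‖ ^ 2 + ‖u‖) ↔
      ‖(innerSL ℝ Λt).comp Λ‖ ≤ 1 / (2 * lam0) := by
  have hconv : ConvexOn ℝ univ fun u ↦ lam0 * ‖Λt - Λ u‖ ^ 2 :=
    (convexOn_norm_sub_linearMap_sq (Λ : F →ₗ[ℝ] H) Λt).smul hlam0.le
  have hderiv (v : F) : HasLineDerivAt ℝ (fun u ↦ lam0 * ‖Λt - Λ u‖ ^ 2)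
      ((-(2 * lam0) • (innerSL ℝ Λt).comp Λ) v) 0 v := by
    have hval : (-(2 * lam0) • (innerSL ℝ Λt).comp Λ) v = lam0 * (-2 * ⟪Λt - Λ 0, Λ v⟫_ℝ) := by
      simp only [smul_apply, ContinuousLinearMap.comp_apply,
        innerSL_apply_apply, smul_eq_mul, map_zero, sub_zero]
      ring
    rw [hval]
    exact (hasLineDerivAt_norm_sub_linearMap_sq (Λ : F →ₗ[ℝ] H) Λt 0 v).const_mul lam0
  have hnorm : ‖-(2 * lam0) • (innerSL ℝ Λt).comp Λ‖ = 2 * lam0 * ‖(innerSL ℝ Λt).comp Λ‖ := by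
    rw [neg_smul, norm_neg, norm_smul_of_nonneg (by positivity)]
  rw [le_div_iff₀' (by positivity), ← hnorm,
    ← forall_le_add_mul_norm_sub_iff_opNorm_le hconv hderiv zero_le_one]
  simp only [norm_zero, add_zero, one_mul, sub_zero]

/-- Proposition 2.2, part b): `u₀ = 0` minimizes `J_{λ₀}(u) = λ₀‖Λ̃ - Λ u‖² + ‖u‖_F`
over `F` if and only if `‖Λ̃* ∘ Λ‖_* ≤ 1/(2λ₀)`. -/
theorem zero_minimizer_iff
    {H : Type*} [NormedAddCommGroup H] [InnerProductSpace ℝ H]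
    {F : Type*} [NormedAddCommGroup F] [NormedSpace ℝ F]
    (Λ : F →L[ℝ] H) (Λt : H)
    (lam0 : ℝ) (hlam0 : 0 < lam0) :
    (∀ u : F, lam0 * ‖Λt - Λ (0 : F)‖ ^ 2 + ‖(0 : F)‖ ≤ lam0 * ‖Λt - Λ u‖ ^ 2 + ‖u‖) ↔
      ‖(innerSL ℝ Λt).comp Λ‖ ≤ 1 / (2 * lam0) :=
  zero_minimizer_iff_general Λ Λt lam0 hlam0
end

section
/- (Proposition 2.2, part c) Fix λ₀ > 0 and suppose ‖Λ̃*∘Λ‖_* > 1/(2λ₀), where Λ̃*∘Λ denotes the linear functional u ↦ ⟨Λ̃, Λ(u)⟩_H on F. If u₀ ∈ F minimizes J_{λ₀} over F and v₀ = Λ̃ − Λ(u₀), then ‖v₀*∘Λ‖_* = 1/(2λ₀) and ⟨v₀, Λ(u₀)⟩_H = ‖u₀‖_F/(2λ₀) > 0. -/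
open scoped InnerProductSpace

/-! Since the fidelity term is smooth and the norm is convex, the first-order condition at a
minimizer `u₀` says that `2λ₀ v₀* ∘ Λ` is a subgradient of `‖·‖_F` at `u₀`. The subgradients of a
norm at `x` are the functionals `φ` with `‖φ‖ ≤ 1` and `φ x = ‖x‖`, and `‖φ‖ = 1` if `x ≠ 0`.
Finally `u₀ = 0` is impossible: it would give `v₀ = Λ̃`, hence `‖Λ̃* ∘ Λ‖_* ≤ 1/(2λ₀)`. -/

open Filter Set
open scoped Topology

section Subgradient

variable {E : Type*} [AddCommGroup E] [Module ℝ E] [TopologicalSpace E]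

/-- `φ` is a subgradient of `p` at `x`, i.e. an element of the subdifferential `∂p(x)`: the affine
function through `(x, p x)` with slope `φ` lies below `p`. Subgradients are taken in the
topological dual, and `p` is defined on the whole space. -/
def IsSubgradientAt (p : E → ℝ) (φ : StrongDual ℝ E) (x : E) : Prop :=
  ∀ y, p x + φ (y - x) ≤ p y

variable [ContinuousAdd E] [ContinuousSMul ℝ E]

theorem IsSubgradientAt.neg_of_isLocalMin_add {f p : E → ℝ} {φ : StrongDual ℝ E} {x : E}
    (hmin : IsLocalMin (f + p) x) (hf : ∀ v, HasLineDerivAt ℝ f (φ v) x v)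
    (hp : ConvexOn ℝ univ p) : IsSubgradientAt p (-φ) x := by
  intro y
  suffices p x - p y ≤ φ (y - x) by
    rw [neg_apply]
    linarith
  have tendsto_segment : Tendsto (fun t : ℝ ↦ x + t • (y - x)) (𝓝[>] 0) (𝓝 x) :=
    (Continuous.tendsto' (by fun_prop) 0 x (by simp)).mono_left nhdsWithin_le_nhds
  refine ge_of_tendsto (hf (y - x)).tendsto_slope_zero_right ?_
  filter_upwards [tendsto_segment.eventually hmin, Ioc_mem_nhdsGT zero_lt_one]
    with t le_on_segment ⟨t_pos, t_le_one⟩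
  have convex_le : p (x + t • (y - x)) ≤ (1 - t) * p x + t * p y := by
    have := hp.2 (mem_univ x) (mem_univ y) (sub_nonneg.2 t_le_one) t_pos.le (sub_add_cancel 1 t)
    rwa [show (1 - t) • x + t • y = x + t • (y - x) by module] at this
  rw [smul_eq_mul, le_inv_mul_iff₀ t_pos]
  simp only [Pi.add_apply] at le_on_segment
  linarith

end Subgradient

section Norm

variable {E : Type*} [SeminormedAddCommGroup E] [NormedSpace ℝ E] {φ : StrongDual ℝ E} {x : E}

theorem isSubgradientAt_norm_iff : IsSubgradientAt norm φ x ↔ ‖φ‖ ≤ 1 ∧ φ x = ‖x‖ := by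
  constructor
  · intro h
    have apply_self : φ x = ‖x‖ := by
      have at_zero := h 0
      have at_double := h ((2 : ℝ) • x)
      rw [zero_sub, map_neg, norm_zero] at at_zero
      rw [two_smul, add_sub_cancel_right, ← two_smul ℝ, norm_smul, Real.norm_two] at at_double
      linarith
    have apply_le (y : E) : φ y ≤ ‖y‖ := by
      simpa only [map_sub, apply_self, add_sub_cancel] using h y
    refine ⟨φ.opNorm_le_bound zero_le_one fun y ↦ ?_, apply_self⟩
    rw [one_mul, Real.norm_eq_abs, abs_le']
    exact ⟨apply_le y, by simpa only [map_neg, norm_neg] using apply_le (-y)⟩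
  · rintro ⟨norm_le, apply_self⟩ y
    calc ‖x‖ + φ (y - x) = φ y := by rw [map_sub, apply_self, add_sub_cancel]
      _ ≤ ‖φ y‖ := le_abs_self _
      _ ≤ ‖y‖ := by simpa only [one_mul] using φ.le_of_opNorm_le norm_le y

theorem opNorm_eq_one_of_isSubgradientAt_norm (h : IsSubgradientAt norm φ x) (hx : ‖x‖ ≠ 0) :
    ‖φ‖ = 1 := by
  obtain ⟨norm_le, apply_self⟩ := isSubgradientAt_norm_iff.1 h
  refine le_antisymm norm_le ?_
  have := φ.ratio_le_opNorm x
  rwa [apply_self, norm_norm, div_self hx] at this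

end Norm

section LeastSquares

variable {H : Type*} [NormedAddCommGroup H] [InnerProductSpace ℝ H]
  {E : Type*} [AddCommGroup E] [Module ℝ E]

theorem hasLineDerivAt_const_mul_norm_sub_sq (Λ : E →ₗ[ℝ] H) (w : H) (c : ℝ) (u v : E) :
    HasLineDerivAt ℝ (fun u ↦ c * ‖w - Λ u‖ ^ 2) (-(2 * c * ⟪w - Λ u, Λ v⟫_ℝ)) u v := by
  have residual : HasDerivAt (fun t : ℝ ↦ w - Λ (u + t • v)) (-Λ v) 0 := by
    simp only [map_add, map_smul]
    simpa using (((hasDerivAt_id (0 : ℝ)).smul_const (Λ v)).const_add (Λ u)).const_sub w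
  refine (residual.norm_sq.const_mul c).congr_deriv ?_
  rw [zero_smul, add_zero, inner_neg_right]
  ring

theorem IsSubgradientAt.of_isLocalMin_const_mul_norm_sub_sq_add [TopologicalSpace E]
    [ContinuousAdd E] [ContinuousSMul ℝ E] {Λ : E →L[ℝ] H} {w : H} {c : ℝ} {p : E → ℝ} {u : E}
    (hmin : IsLocalMin (fun u ↦ c * ‖w - Λ u‖ ^ 2 + p u) u) (hp : ConvexOn ℝ univ p) :
    IsSubgradientAt p ((2 * c) • (innerSL ℝ (w - Λ u)).comp Λ) u := by
  rw [← neg_neg ((2 * c) • _)]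
  exact .neg_of_isLocalMin_add hmin
    (hasLineDerivAt_const_mul_norm_sub_sq (Λ : E →ₗ[ℝ] H) w c u) hp

end LeastSquares

/-- Proposition 2.2, part c): if `‖Λ̃* ∘ Λ‖_* > 1/(2λ₀)` and `u₀` minimizes
`J_{λ₀}(u) = λ₀‖Λ̃ - Λ u‖² + ‖u‖_F` over `F`, then, with `v₀ = Λ̃ - Λ u₀`,
`‖v₀* ∘ Λ‖_* = 1/(2λ₀)` and `⟪v₀, Λ u₀⟫ = ‖u₀‖_F/(2λ₀) > 0`. -/
theorem minimizer_characterization_saturated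
    {H : Type*} [NormedAddCommGroup H] [InnerProductSpace ℝ H]
    {F : Type*} [NormedAddCommGroup F] [NormedSpace ℝ F]
    (Λ : F →L[ℝ] H) (Λt : H)
    (lam0 : ℝ) (hlam0 : 0 < lam0)
    (hbig : 1 / (2 * lam0) < ‖(innerSL ℝ Λt).comp Λ‖)
    (u0 : F)
    (hmin : ∀ u : F, lam0 * ‖Λt - Λ u0‖ ^ 2 + ‖u0‖ ≤ lam0 * ‖Λt - Λ u‖ ^ 2 + ‖u‖) :
    ‖(innerSL ℝ (Λt - Λ u0)).comp Λ‖ = 1 / (2 * lam0) ∧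
      ⟪Λt - Λ u0, Λ u0⟫_ℝ = ‖u0‖ / (2 * lam0) ∧ 0 < ‖u0‖ / (2 * lam0) := by
  have two_mul_pos : 0 < 2 * lam0 := by positivity
  set φ := (innerSL ℝ (Λt - Λ u0)).comp Λ with hφ
  have subgradient : IsSubgradientAt norm ((2 * lam0) • φ) u0 :=
    .of_isLocalMin_const_mul_norm_sub_sq_add (.of_forall hmin) convexOn_univ_norm
  have norm_smul_φ : ‖(2 * lam0) • φ‖ = 2 * lam0 * ‖φ‖ := norm_smul_of_nonneg two_mul_pos.le φ
  obtain ⟨norm_le, apply_self⟩ := isSubgradientAt_norm_iff.1 subgradient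
  have u0_ne : u0 ≠ 0 := by
    rintro rfl
    rw [norm_smul_φ, ← le_div_iff₀' two_mul_pos, hφ, map_zero, sub_zero] at norm_le
    exact hbig.not_ge norm_le
  refine ⟨?_, ?_, div_pos (norm_pos_iff.2 u0_ne) two_mul_pos⟩
  · rw [eq_div_iff two_mul_pos.ne', mul_comm, ← norm_smul_φ]
    exact opNorm_eq_one_of_isSubgradientAt_norm subgradient (norm_ne_zero_iff.2 u0_ne)
  · rw [eq_div_iff two_mul_pos.ne', mul_comm]
    exact apply_self
end

section
/- (Remark 2.1, characterization of the minimizing set) Fix λ₀ > 0 and suppose u₀ ∈ F minimizes J_{λ₀} over F. Then u ∈ F minimizes J_{λ₀} over F if and only if Λ(u − u₀) = 0 and ‖u‖_F = ‖u₀‖_F. -/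
open scoped InnerProductSpace

/-!
If `u` and `v` minimize `f (A w) + g w` with `f` strictly convex, `g` convex and `A u ≠ A v`, then
the midpoint of `u` and `v` has a strictly smaller value. Hence `A`, and with it `g`, is constant
on the set of minimizers. A squared distance is strictly convex in any strictly convex space.
-/

open Set

section CompositeMinimization

variable {𝕜 E F β : Type*} [Field 𝕜] [LinearOrder 𝕜] [IsStrictOrderedRing 𝕜]
  [AddCommMonoid β] [PartialOrder β] [IsOrderedCancelAddMonoid β] [Module 𝕜 β] [PosSMulMono 𝕜 β]
  {f : F → β} {g : E → β} {s : Set E} {t : Set F} {u v : E}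

theorem map_eq_of_isMinOn_comp_add [AddCommMonoid E] [Module 𝕜 E] [AddCommMonoid F] [Module 𝕜 F]
    (hf : StrictConvexOn 𝕜 t f) (hg : ConvexOn 𝕜 s g) (A : E →ₗ[𝕜] F) (hA : MapsTo A s t)
    (hu : u ∈ s) (hv : v ∈ s) (hu_min : IsMinOn (f ∘ A + g) s u)
    (hv_min : IsMinOn (f ∘ A + g) s v) : A u = A v := by
  by_contra hne
  have half_pos : (0 : 𝕜) < 2⁻¹ := by norm_num
  have half_add_half : (2⁻¹ : 𝕜) + 2⁻¹ = 1 := by norm_num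
  let m := (2⁻¹ : 𝕜) • u + (2⁻¹ : 𝕜) • v
  have hm : m ∈ s := hg.1 hu hv half_pos.le half_pos.le half_add_half
  have hfm : f (A m) < (2⁻¹ : 𝕜) • f (A u) + (2⁻¹ : 𝕜) • f (A v) := by
    simpa only [m, map_add, map_smul] using
      hf.2 (hA hu) (hA hv) hne half_pos half_pos half_add_half
  have hgm : g m ≤ (2⁻¹ : 𝕜) • g u + (2⁻¹ : 𝕜) • g v :=
    hg.2 hu hv half_pos.le half_pos.le half_add_half
  refine lt_irrefl (f (A m) + g m) ?_
  calc
    f (A m) + g m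
      < ((2⁻¹ : 𝕜) • f (A u) + (2⁻¹ : 𝕜) • f (A v))
          + ((2⁻¹ : 𝕜) • g u + (2⁻¹ : 𝕜) • g v) := add_lt_add_of_lt_of_le hfm hgm
    _ = (2⁻¹ : 𝕜) • (f (A u) + g u) + (2⁻¹ : 𝕜) • (f (A v) + g v) := by
      rw [smul_add, smul_add, add_add_add_comm]
    _ ≤ (2⁻¹ : 𝕜) • (f (A m) + g m) + (2⁻¹ : 𝕜) • (f (A m) + g m) := by
      gcongr ?_ • ?_ + ?_ • ?_
      exacts [hu_min hm, hv_min hm]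
    _ = f (A m) + g m := by rw [← add_smul, half_add_half, one_smul]

theorem minimizing_set_characterization_general [AddCommGroup E] [Module 𝕜 E] [AddCommGroup F]
    [Module 𝕜 F] (hf : StrictConvexOn 𝕜 t f) (hg : ConvexOn 𝕜 s g) (A : E →ₗ[𝕜] F)
    (hA : MapsTo A s t) (hu : u ∈ s) (hv : v ∈ s) (hv_min : IsMinOn (f ∘ A + g) s v) :
    IsMinOn (f ∘ A + g) s u ↔ A (u - v) = 0 ∧ g u = g v := by
  rw [map_sub, sub_eq_zero]
  constructor
  · intro hu_min
    have hAuv : A u = A v := map_eq_of_isMinOn_comp_add hf hg A hA hu hv hu_min hv_min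
    have hvalue : f (A u) + g u = f (A v) + g v := (hu_min hv).antisymm (hv_min hu)
    rw [hAuv] at hvalue
    exact ⟨hAuv, add_left_cancel hvalue⟩
  · rintro ⟨hAuv, hguv⟩ w hw
    change f (A u) + g u ≤ f (A w) + g w
    rw [hAuv, hguv]
    exact hv_min hw

end CompositeMinimization

theorem strictConvexOn_const_smul {𝕜 E β : Type*} [CommSemiring 𝕜] [PartialOrder 𝕜]
    [AddCommMonoid E] [SMul 𝕜 E] [AddCommMonoid β] [PartialOrder β] [Module 𝕜 β]
    [PosSMulStrictMono 𝕜 β] {s : Set E} {f : E → β} {c : 𝕜} (hc : 0 < c)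
    (hf : StrictConvexOn 𝕜 s f) : StrictConvexOn 𝕜 s fun x => c • f x :=
  ⟨hf.1, fun x hx y hy hxy a b ha hb hab =>
    calc
      c • f (a • x + b • y) < c • (a • f x + b • f y) :=
        smul_lt_smul_of_pos_left (hf.2 hx hy hxy ha hb hab) hc
      _ = a • c • f x + b • c • f y := by rw [smul_add, smul_comm c, smul_comm c]⟩

section NormStrictConvexity

variable {E : Type*} [NormedAddCommGroup E] [NormedSpace ℝ E] [StrictConvexSpace ℝ E]

theorem strictConvexOn_comp_norm {φ : ℝ → ℝ} (hφ : StrictConvexOn ℝ (Ici 0) φ)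
    (hφ_mono : StrictMonoOn φ (Ici 0)) : StrictConvexOn ℝ univ fun x : E => φ ‖x‖ := by
  refine ⟨convex_univ, fun x _ y _ hxy a b ha hb hab => ?_⟩
  rcases eq_or_ne ‖x‖ ‖y‖ with hnorm | hnorm
  · calc
      φ ‖a • x + b • y‖ < φ ‖y‖ :=
        hφ_mono (norm_nonneg _) (norm_nonneg _)
          (norm_combo_lt_of_ne hnorm.le le_rfl hxy ha hb hab)
      _ = a • φ ‖x‖ + b • φ ‖y‖ := by rw [hnorm, ← add_smul, hab, one_smul]
  · calc
      φ ‖a • x + b • y‖ ≤ φ (a • ‖x‖ + b • ‖y‖) :=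
        hφ_mono.monotoneOn (norm_nonneg _)
          (hφ.1 (norm_nonneg _) (norm_nonneg _) ha.le hb.le hab)
          (convexOn_univ_norm.2 (mem_univ x) (mem_univ y) ha.le hb.le hab)
      _ < a • φ ‖x‖ + b • φ ‖y‖ := hφ.2 (norm_nonneg _) (norm_nonneg _) hnorm ha hb hab

theorem strictConvexOn_const_mul_norm_sub_pow {c : ℝ} (hc : 0 < c) {n : ℕ} (hn : 2 ≤ n) (z : E) :
    StrictConvexOn ℝ univ fun x : E => c * ‖z - x‖ ^ n := by
  have hpow : StrictConvexOn ℝ univ fun x : E => ‖x‖ ^ n :=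
    strictConvexOn_comp_norm (strictConvexOn_pow hn) (pow_left_strictMonoOn₀ (by lia))
  simp_rw [norm_sub_rev z, sub_eq_add_neg]
  exact strictConvexOn_const_smul hc (hpow.translate_left (-z))

end NormStrictConvexity

/-- Remark 2.1, characterization of the minimizing set: if `u₀` minimizes
`J_{λ₀}(u) = λ₀‖Λ̃ - Λ u‖² + ‖u‖_F` over `F`, then `u` minimizes `J_{λ₀}` over `F`
if and only if `Λ (u - u₀) = 0` and `‖u‖_F = ‖u₀‖_F`. -/
theorem minimizing_set_characterization
    {H : Type*} [NormedAddCommGroup H] [InnerProductSpace ℝ H]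
    {F : Type*} [NormedAddCommGroup F] [NormedSpace ℝ F]
    (Λ : F →L[ℝ] H) (Λt : H)
    (lam0 : ℝ) (hlam0 : 0 < lam0) (u0 : F)
    (hmin : ∀ u : F, lam0 * ‖Λt - Λ u0‖ ^ 2 + ‖u0‖ ≤ lam0 * ‖Λt - Λ u‖ ^ 2 + ‖u‖) :
    ∀ u : F,
      (∀ w : F, lam0 * ‖Λt - Λ u‖ ^ 2 + ‖u‖ ≤ lam0 * ‖Λt - Λ w‖ ^ 2 + ‖w‖) ↔
        (Λ (u - u0) = 0 ∧ ‖u‖ = ‖u0‖) := by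
  intro u
  simpa only [isMinOn_univ_iff] using! minimizing_set_characterization_general
    (strictConvexOn_const_mul_norm_sub_pow hlam0 le_rfl Λt) convexOn_univ_norm Λ.toLinearMap
    (mapsTo_univ _ _) (mem_univ u) (mem_univ u0) (isMinOn_univ_iff.2 hmin)
end

section
/- (Lemma 2.3, injectivity part) For γ ∈ ℓ¹, one has Λ(γ) = 0 if and only if γ_j = −(b/j)·γ₁ for every j ≥ 2. Since the sequence (−b/j)_{j≥2} is not summable, this forces γ₁ = 0 and hence γ = 0; consequently Λ is injective on ℓ¹, and in particular on F. -/
/-!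
The functionals `D₁ = 0` and `D_k γ = γ₁ + (k / b) γ_k` for `k ≥ 2` turn `Λ` into a bidiagonal
system: `(Λ γ)₁ = 0` and `(Λ γ)_{k+1} = (η_{k+1} + μ_{k+1}) D_{k+1} γ - μ_{k+1} D_k γ`. Both sides
are continuous in `γ`, so it suffices to compare them on the unit vectors. Since the diagonal
entries do not vanish, `Λ γ = 0` exactly when every `D_k γ` vanishes, that is, when
`γ_k = -(b / k) γ₁` for `k ≥ 2`; as the harmonic series diverges, the only summable sequence of
this form is `0`.
-/

open scoped ENNReal InnerProductSpace

noncomputable section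

/-- `X = ℓ¹` over the positive integers. -/
abbrev X : Type := lp (fun _ : ℕ+ => ℝ) 1

/-- `H = ℓ²` over the positive integers. -/
abbrev Hl : Type := lp (fun _ : ℕ+ => ℝ) 2

/-- Standard unit vectors of `ℓ¹`. -/
def eX (j : ℕ+) : X := lp.single 1 j 1

/-- Standard unit vectors of `ℓ²`. -/
def eH (j : ℕ+) : Hl := lp.single 2 j 1

lemma eX_apply (j k : ℕ+) : eX j k = if k = j then 1 else 0 := by
  rw [eX, lp.single_apply, Pi.single_apply]

lemma eH_apply (j k : ℕ+) : eH j k = if k = j then 1 else 0 := by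
  rw [eH, lp.single_apply, Pi.single_apply]

lemma two_le_of_ne_one {j : ℕ+} (hj : j ≠ 1) : 2 ≤ j :=
  PNat.add_one_le_iff.2 (one_le.lt_of_ne' hj)

lemma continuousLinearMap_ext_eX {F : Type*} [AddCommMonoid F] [Module ℝ F] [TopologicalSpace F]
    [T2Space F] {S T : X →L[ℝ] F} (h : ∀ j, S (eX j) = T (eX j)) : S = T :=
  lp.ext_continuousLinearMap ENNReal.one_ne_top fun j => ContinuousLinearMap.ext_ring (h j)

lemma tsum_smul_eH_apply {a : ℕ+ → ℝ} (ha : Memℓp a 2) (k : ℕ+) :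
    (∑' m, a m • eH m) k = a k := by
  have hsum : HasSum (fun m => a m • eH m) (⟨a, ha⟩ : Hl) := by
    simpa only [eH, ← lp.single_smul, smul_eq_mul, mul_one] using
      lp.hasSum_single ENNReal.ofNat_ne_top (⟨a, ha⟩ : Hl)
  rw [hsum.tsum_eq]

lemma memℓp_two_sqrt {ι : Type*} {f : ι → ℝ} (hf : Summable f) :
    Memℓp (fun i => √(f i)) 2 := by
  refine memℓp_gen (hf.abs.of_nonneg_of_le (fun i => by positivity) fun i => ?_)
  calc ‖√(f i)‖ ^ (2 : ℝ≥0∞).toReal = √(f i) ^ 2 := by simp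
    _ ≤ √|f i| ^ 2 := by gcongr; exact le_abs_self _
    _ = |f i| := Real.sq_sqrt (abs_nonneg _)

lemma summable_pnat_div_pow (c : ℝ) {M : ℝ} (hM : 1 < M) :
    Summable fun j : ℕ+ => c / M ^ (j : ℕ) := by
  have hgeom : Summable fun n : ℕ => c * (1 / M) ^ n :=
    (summable_geometric_of_lt_one (by positivity) ((div_lt_one (by positivity)).2 hM)).mul_left c
  refine (hgeom.comp_injective PNat.coe_injective).congr fun j => ?_
  rw [Function.comp_apply, one_div_pow, mul_one_div]

lemma eq_zero_of_summable_of_eq_div {u : ℕ+ → ℝ} {c : ℝ} (hu : Summable u)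
    (huc : ∀ j : ℕ+, 2 ≤ j → u j = c / j) : c = 0 := by
  by_contra hc
  have heq : u =ᶠ[Filter.cofinite] fun j : ℕ+ => c / j := by
    filter_upwards [(Set.finite_Iio (2 : ℕ+)).compl_mem_cofinite] with j hj
    exact huc j (not_lt.1 hj)
  have hharm : Summable fun j : ℕ+ => (1 : ℝ) / j :=
    (summable_const_div_iff hc).1 (hu.congr_cofinite heq)
  exact Real.not_summable_one_div_natCast
    (summable_pnat_iff_summable_nat (f := fun n : ℕ => (1 : ℝ) / n) |>.1 hharm)

lemma eq_zero_of_forall_eq_neg_div_mul {b : ℝ} (hb : b ≠ 0) {γ : X}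
    (h : ∀ j : ℕ+, 2 ≤ j → γ j = -(b / (j : ℝ)) * γ 1) : γ = 0 := by
  have hγ : Summable γ := .of_norm (by simpa using (lp.memℓp γ).summable (by norm_num))
  have hconst : -b * γ 1 = 0 :=
    eq_zero_of_summable_of_eq_div hγ fun j hj => by rw [h j hj]; ring
  have hγ1 : γ 1 = 0 := (mul_eq_zero.1 hconst).resolve_left (neg_ne_zero.2 hb)
  ext j
  obtain rfl | hj := eq_or_ne j 1
  · simpa using hγ1
  · simp [h j (two_le_of_ne_one hj), hγ1]

/-- The functional `D_j γ = γ₁ + (j / b) γ_j` on `ℓ¹`, measuring the failure of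
`γ_j = -(b / j) γ₁`. The value `D₁ = 0` is a convention that lets the recursion for the coordinates
of `Λ γ` start at the first one. -/
def defect (b : ℝ) (j : ℕ+) : X →L[ℝ] ℝ :=
  if j = 1 then 0
  else lp.evalCLM ℝ (fun _ : ℕ+ => ℝ) 1 1 + ((j : ℝ) / b) • lp.evalCLM ℝ (fun _ : ℕ+ => ℝ) 1 j

lemma defect_apply (b : ℝ) (j : ℕ+) (γ : X) :
    defect b j γ = if j = 1 then 0 else γ 1 + j / b * γ j := by
  unfold defect
  split_ifs <;> rfl

lemma defect_eX_one (b : ℝ) (k : ℕ+) : defect b k (eX 1) = if k = 1 then 0 else 1 := by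
  rw [defect_apply]
  split_ifs with hk <;> simp [eX_apply, hk]

lemma defect_eX_of_ne_one (b : ℝ) {j : ℕ+} (hj : j ≠ 1) (k : ℕ+) :
    defect b k (eX j) = j / b * if k = j then 1 else 0 := by
  rw [defect_apply, eX_apply, eX_apply, if_neg hj.symm]
  obtain rfl | hkj := eq_or_ne k j
  · simp [hj]
  · simp [hkj]

lemma forall_defect_eq_zero_iff {b : ℝ} (hb : b ≠ 0) (γ : X) :
    (∀ j, defect b j γ = 0) ↔ ∀ j : ℕ+, 2 ≤ j → γ j = -(b / (j : ℝ)) * γ 1 := by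
  refine forall_congr' fun j => ?_
  obtain rfl | hj := eq_or_ne j 1
  · simp [defect_apply]
  · have hj0 : (j : ℝ) ≠ 0 := by positivity
    rw [defect_apply, if_neg hj, imp_iff_right (two_le_of_ne_one hj)]
    field_simp
    constructor <;> intro h <;> linarith

/-- `Λ` acts on the unit vectors of `ℓ¹` by the formulas of the paper, for arbitrary coefficient
sequences `η` and `μ`; by continuity these formulas determine `Λ`. The series for `Λ e₁` is
meaningful when `η ∈ ℓ²`. -/
structure IsLambda (b : ℝ) (η μ : ℕ+ → ℝ) (Λ : X →L[ℝ] Hl) : Prop where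
  map_eX_one : Λ (eX 1) = (∑' m : ℕ+, (if 2 ≤ m then η m else 0) • eH m) + μ 2 • eH 2
  map_eX : ∀ j : ℕ+, 2 ≤ j →
    Λ (eX j) = ((j : ℝ) / b) • ((η j + μ j) • eH j - μ (j + 1) • eH (j + 1))

namespace IsLambda

variable {b : ℝ} {η μ : ℕ+ → ℝ} {Λ : X →L[ℝ] Hl}

lemma map_eX_one_apply (hΛ : IsLambda b η μ Λ) (hη : Memℓp η 2) (k : ℕ+) :
    Λ (eX 1) k = (if 2 ≤ k then η k else 0) + if k = 2 then μ 2 else 0 := by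
  have htail : Memℓp (fun m : ℕ+ => if 2 ≤ m then η m else 0) 2 :=
    hη.mono' fun m => by split_ifs <;> simp
  rw [hΛ.map_eX_one, lp.coeFn_add, Pi.add_apply, tsum_smul_eH_apply htail, lp.coeFn_smul,
    Pi.smul_apply, eH_apply, smul_eq_mul, mul_ite, mul_one, mul_zero]

lemma map_eX_apply (hΛ : IsLambda b η μ Λ) {j : ℕ+} (hj : 2 ≤ j) (k : ℕ+) :
    Λ (eX j) k = j / b * ((η j + μ j) * (if k = j then 1 else 0)
      - μ (j + 1) * if k = j + 1 then 1 else 0) := by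
  simp only [hΛ.map_eX j hj, lp.coeFn_smul, lp.coeFn_sub, Pi.smul_apply, Pi.sub_apply, eH_apply,
    smul_eq_mul]

lemma apply_one (hΛ : IsLambda b η μ Λ) (hη : Memℓp η 2) (γ : X) : Λ γ 1 = 0 := by
  suffices h : (lp.evalCLM ℝ (fun _ : ℕ+ => ℝ) 2 1).comp Λ = 0 from DFunLike.congr_fun h γ
  refine continuousLinearMap_ext_eX fun j => ?_
  change Λ (eX j) 1 = 0
  obtain rfl | hj := eq_or_ne j 1
  · simp [hΛ.map_eX_one_apply hη]
  · have hj' : 1 ≠ j + 1 := (PNat.lt_add_left 1 j).ne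
    simp [hΛ.map_eX_apply (two_le_of_ne_one hj), hj.symm, hj']

lemma apply_add_one (hΛ : IsLambda b η μ Λ) (hη : Memℓp η 2) (γ : X) (k : ℕ+) :
    Λ γ (k + 1) =
      (η (k + 1) + μ (k + 1)) * defect b (k + 1) γ - μ (k + 1) * defect b k γ := by
  suffices h : (lp.evalCLM ℝ (fun _ : ℕ+ => ℝ) 2 (k + 1)).comp Λ =
      (η (k + 1) + μ (k + 1)) • defect b (k + 1) - μ (k + 1) • defect b k from
    DFunLike.congr_fun h γ
  refine continuousLinearMap_ext_eX fun j => ?_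
  change Λ (eX j) (k + 1) =
    (η (k + 1) + μ (k + 1)) * defect b (k + 1) (eX j) - μ (k + 1) * defect b k (eX j)
  obtain rfl | hj := eq_or_ne j 1
  · have hk1 : k + 1 ≠ 1 := (PNat.lt_add_left 1 k).ne'
    rw [hΛ.map_eX_one_apply hη, if_pos (two_le_of_ne_one hk1), defect_eX_one, defect_eX_one,
      if_neg hk1]
    obtain rfl | hk := eq_or_ne k 1
    · simp [show (1 : ℕ+) + 1 = 2 from rfl]
    · have hk2 : k + 1 ≠ 2 := fun h => hk (add_right_cancel (b := 1) h)
      rw [if_neg hk2, if_neg hk]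
      ring
  · rw [hΛ.map_eX_apply (two_le_of_ne_one hj), defect_eX_of_ne_one b hj, defect_eX_of_ne_one b hj]
    have hsucc : k ≠ k + 1 := (PNat.lt_add_right k 1).ne
    obtain rfl | hkj := eq_or_ne k j
    · simp [hsucc.symm, mul_comm]
    · obtain rfl | hkj' := eq_or_ne (k + 1) j
      · simp [hsucc, mul_comm]
      · simp [hkj, hkj']

lemma map_eq_zero_iff (hΛ : IsLambda b η μ Λ) (hη : Memℓp η 2)
    (hημ : ∀ j : ℕ+, 2 ≤ j → η j + μ j ≠ 0) (γ : X) :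
    Λ γ = 0 ↔ ∀ j, defect b j γ = 0 := by
  constructor
  · intro hγ j
    induction j using PNat.recOn with
    | one => simp [defect_apply]
    | succ k ih =>
      have hcoord := hΛ.apply_add_one hη γ k
      rw [hγ, ih, lp.coeFn_zero, Pi.zero_apply, mul_zero, sub_zero, eq_comm] at hcoord
      exact (mul_eq_zero.1 hcoord).resolve_left (hημ _ (add_le_add_left one_le 1))
  · intro hdefect
    ext k
    induction k using PNat.recOn with
    | one => simp [hΛ.apply_one hη]
    | succ k _ => simp [hΛ.apply_add_one hη, hdefect]

end IsLambda

theorem lambda_injective_general {b : ℝ} {η μ : ℕ+ → ℝ} {Λ : X →L[ℝ] Hl} (hb : b ≠ 0)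
    (hη : Memℓp η 2) (hημ : ∀ j : ℕ+, 2 ≤ j → η j + μ j ≠ 0) (hΛ : IsLambda b η μ Λ) :
    (∀ γ : X, Λ γ = 0 ↔ ∀ j : ℕ+, 2 ≤ j → γ j = -(b / (j : ℝ)) * γ 1) ∧
    (∀ γ : X, Λ γ = 0 → γ = 0) ∧
    Function.Injective Λ := by
  have hker (γ : X) : Λ γ = 0 ↔ ∀ j : ℕ+, 2 ≤ j → γ j = -(b / (j : ℝ)) * γ 1 :=
    (hΛ.map_eq_zero_iff hη hημ γ).trans (forall_defect_eq_zero_iff hb γ)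
  have hzero (γ : X) (hγ : Λ γ = 0) : γ = 0 :=
    eq_zero_of_forall_eq_neg_div_mul hb ((hker γ).1 hγ)
  exact ⟨hker, hzero, (injective_iff_map_eq_zero Λ).2 hzero⟩

/-- Lemma 2.3, injectivity part: for `γ ∈ ℓ¹` one has `Λ(γ) = 0` if and only if
`γ_j = -(b/j)·γ₁` for every `j ≥ 2`; moreover `Λ(γ) = 0` forces `γ = 0`,
hence `Λ` is injective on `ℓ¹`. -/
theorem lambda_injective
    (M α₀ c₀ b δ : ℝ) (hM : 2 ≤ M) (hα₀ : 0 < α₀) (hc₀ : 0 < c₀) (hb : 0 < b)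
    (hδ0 : 0 < δ) (hδ1 : δ < 1)
    (η μ : ℕ+ → ℝ)
    (hη : ∀ j : ℕ+, η j = Real.sqrt (c₀ / M ^ (j : ℕ)))
    (hμ : ∀ j : ℕ+, μ j = -δ * η j)
    (Λ : X →L[ℝ] Hl)
    (hΛ1 : Λ (eX 1) = (∑' m : ℕ+, (if 2 ≤ m then η m else 0) • eH m) + μ 2 • eH 2)
    (hΛj : ∀ j : ℕ+, 2 ≤ j →
      Λ (eX j) = ((j : ℝ) / b) • ((η j + μ j) • eH j - μ (j + 1) • eH (j + 1)))
    (hΛsum : ∀ γ : X, HasSum (fun j : ℕ+ => γ j • Λ (eX j)) (Λ γ)) :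
    (∀ γ : X, Λ γ = 0 ↔ ∀ j : ℕ+, 2 ≤ j → γ j = -(b / (j : ℝ)) * γ 1) ∧
    (∀ γ : X, Λ γ = 0 → γ = 0) ∧
    Function.Injective Λ := by
  obtain rfl : η = fun j : ℕ+ => √(c₀ / M ^ (j : ℕ)) := funext hη
  have hdiag (j : ℕ+) : √(c₀ / M ^ (j : ℕ)) + μ j ≠ 0 := by
    have hpos : 0 < √(c₀ / M ^ (j : ℕ)) := by positivity
    rw [hμ]
    nlinarith
  exact lambda_injective_general hb.ne' (memℓp_two_sqrt (summable_pnat_div_pow c₀ (by linarith)))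
    (fun j _ => hdiag j) ⟨hΛ1, hΛj⟩

end
end
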